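/- arXiv:2410.09873 — 3 statements merged into one kernel-verified Lean document; each statement's English description precedes it below -/
import Mathlib

section
/- (Two-step skipping total error bound.) Under the setup of the two-step skipping trajectories, i.e., skipped trajectory x_{i-1} = f(i−1) • x_i − g(i−1) • ε x_{i+1} t_{i+1}, x_{i-2} = f(i−2) • x_{i-1} − g(i−2) • ε x_{i+1} t_{i+1}, and original trajectory x_{i-1}^{ori} = f(i−1) • x_i − g(i−1) • ε x_i t_i, x_{i-2}^{ori} = f(i−2) • x_{i-1}^{ori} − g(i−2) • ε x_{i-1}^{ori} t_{i-1}, with ε Lipschitz with constants L₁ (first argument) and L₂ (second argument), the two-step skipping error satisfies ‖x_{i-2} − x_{i-2}^{ori}‖ ≤ (|f(i−2)|·|g(i−1)| + |g(i−2)|) · (L₁ · ‖x_i − x_{i+1}‖ + L₂ · |t_i − t_{i+1}|) + |g(i−2)| · (L₁ · ‖x_{i-1}^{ori} − x_i‖ + L₂ · |t_{i-1} − t_i|). In particular, the error of continuously skipping two steps is upper-bounded by an accumulation of first-order differences of consecutive latents and timesteps. -/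
open scoped NNReal

/-!
The two trajectories start from the same latent and differ only in the noise predictions they
subtract. Both updates are affine in the latent and the noise, so the final error is a linear
combination of differences of noise predictions; telescoping through the prediction of the first
original step makes those differences consecutive, and the Lipschitz bounds apply to each.
-/

/-- The denoising update with scheduler coefficients `a` and `b` applied to the latent `x`. The
noise `n` is a free argument, so that the original step (`n` predicted at `x`) and the skipped step
(`n` reused from an earlier latent) are instances of the same map. -/
def denoiseStep {𝕜 E : Type*} [AddCommGroup E] [SMul 𝕜 E] (a b : 𝕜) (x n : E) : E :=
  a • x - b • n

theorem dist_le_of_forall_lipschitzWith {α β γ : Type*} [PseudoMetricSpace α]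
    [PseudoMetricSpace β] [PseudoMetricSpace γ] {F : α → β → γ} {K L : ℝ≥0}
    (hK : ∀ b, LipschitzWith K fun a => F a b) (hL : ∀ a, LipschitzWith L (F a))
    (a a' : α) (b b' : β) : dist (F a b) (F a' b') ≤ K * dist a a' + L * dist b b' :=
  calc
    dist (F a b) (F a' b') ≤ dist (F a b) (F a' b) + dist (F a' b) (F a' b') :=
      dist_triangle _ _ _
    _ ≤ K * dist a a' + L * dist b b' :=
      add_le_add ((hK b).dist_le_mul a a') ((hL a').dist_le_mul b b')

theorem denoiseStep_sub_denoiseStep {𝕜 E : Type*} [AddCommGroup E] [Monoid 𝕜]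
    [DistribMulAction 𝕜 E] (a b : 𝕜) (x y m n : E) :
    denoiseStep a b x m - denoiseStep a b y n = a • (x - y) + b • (n - m) := by
  simp only [denoiseStep, smul_sub]
  abel

theorem two_denoiseStep_sub_two_denoiseStep {𝕜 E : Type*} [Ring 𝕜] [AddCommGroup E] [Module 𝕜 E]
    (a₁ b₁ a₂ b₂ : 𝕜) (x m n₁ n₂ : E) :
    denoiseStep a₂ b₂ (denoiseStep a₁ b₁ x m) m - denoiseStep a₂ b₂ (denoiseStep a₁ b₁ x n₁) n₂ =
      (a₂ * b₁ + b₂) • (n₁ - m) + b₂ • (n₂ - n₁) := by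
  have telescope : n₂ - m = (n₁ - m) + (n₂ - n₁) := by abel
  rw [denoiseStep_sub_denoiseStep, denoiseStep_sub_denoiseStep, sub_self, smul_zero, zero_add,
    telescope, smul_add, add_smul, mul_smul, add_assoc]

section Bounds

variable {𝕜 E : Type*} [SeminormedRing 𝕜] [SeminormedAddCommGroup E] [Module 𝕜 E]
  [IsBoundedSMul 𝕜 E]

theorem norm_two_denoiseStep_sub_two_denoiseStep_le (a₁ b₁ a₂ b₂ : 𝕜) (x m n₁ n₂ : E) :
    ‖denoiseStep a₂ b₂ (denoiseStep a₁ b₁ x m) m -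
        denoiseStep a₂ b₂ (denoiseStep a₁ b₁ x n₁) n₂‖ ≤
      (‖a₂‖ * ‖b₁‖ + ‖b₂‖) * ‖n₁ - m‖ + ‖b₂‖ * ‖n₂ - n₁‖ := by
  have coeff_le : ‖a₂ * b₁ + b₂‖ ≤ ‖a₂‖ * ‖b₁‖ + ‖b₂‖ :=
    norm_add_le_of_le (norm_mul_le a₂ b₁) le_rfl
  calc
    _ = ‖(a₂ * b₁ + b₂) • (n₁ - m) + b₂ • (n₂ - n₁)‖ := by
      rw [two_denoiseStep_sub_two_denoiseStep]
    _ ≤ ‖a₂ * b₁ + b₂‖ * ‖n₁ - m‖ + ‖b₂‖ * ‖n₂ - n₁‖ :=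
      norm_add_le_of_le (norm_smul_le _ _) (norm_smul_le _ _)
    _ ≤ (‖a₂‖ * ‖b₁‖ + ‖b₂‖) * ‖n₁ - m‖ + ‖b₂‖ * ‖n₂ - n₁‖ := by gcongr

theorem two_step_skipping_total_error_general {T : Type*} [PseudoMetricSpace T]
    {ε : E → T → E} {L₁ L₂ : ℝ≥0} (hL₁ : ∀ t, LipschitzWith L₁ fun x => ε x t)
    (hL₂ : ∀ x, LipschitzWith L₂ (ε x)) (a₁ b₁ a₂ b₂ : 𝕜) (t₀ t₁ t₂ : T) (x₀ x₁ : E)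
    {x₂ : E} (hx₂ : x₂ = denoiseStep a₁ b₁ x₁ (ε x₁ t₁)) :
    ‖denoiseStep a₂ b₂ (denoiseStep a₁ b₁ x₁ (ε x₀ t₀)) (ε x₀ t₀) -
        denoiseStep a₂ b₂ x₂ (ε x₂ t₂)‖ ≤
      (‖a₂‖ * ‖b₁‖ + ‖b₂‖) * (L₁ * ‖x₁ - x₀‖ + L₂ * dist t₁ t₀) +
        ‖b₂‖ * (L₁ * ‖x₂ - x₁‖ + L₂ * dist t₂ t₁) := by
  have noise_le (x y : E) (s t : T) : ‖ε x s - ε y t‖ ≤ L₁ * ‖x - y‖ + L₂ * dist s t := by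
    simpa only [dist_eq_norm] using dist_le_of_forall_lipschitzWith hL₁ hL₂ x y s t
  calc
    _ ≤ (‖a₂‖ * ‖b₁‖ + ‖b₂‖) * ‖ε x₁ t₁ - ε x₀ t₀‖ + ‖b₂‖ * ‖ε x₂ t₂ - ε x₁ t₁‖ := by
      simpa only [← hx₂] using norm_two_denoiseStep_sub_two_denoiseStep_le a₁ b₁ a₂ b₂ x₁
        (ε x₀ t₀) (ε x₁ t₁) (ε x₂ t₂)
    _ ≤ _ := by gcongr <;> exact noise_le ..

end Bounds

/-- Two-step skipping total error bound: the error of continuously skipping two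
noise-prediction steps is bounded by an accumulation of first-order differences
of consecutive latents and timesteps. -/
theorem two_step_skipping_total_error {E : Type*} [NormedAddCommGroup E] [NormedSpace ℝ E]
    (ε : E → ℝ → E) (L₁ L₂ : ℝ≥0)
    (hL₁ : ∀ t : ℝ, LipschitzWith L₁ (fun x => ε x t))
    (hL₂ : ∀ x : E, LipschitzWith L₂ (fun t => ε x t))
    (f g : ℤ → ℝ) (t : ℤ → ℝ) (i : ℤ)
    (xip1 xi xim1 xim2 xim1_ori xim2_ori : E)
    (h_skip1 : xim1 = f (i - 1) • xi - g (i - 1) • ε xip1 (t (i + 1)))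
    (h_skip2 : xim2 = f (i - 2) • xim1 - g (i - 2) • ε xip1 (t (i + 1)))
    (h_ori1 : xim1_ori = f (i - 1) • xi - g (i - 1) • ε xi (t i))
    (h_ori2 : xim2_ori = f (i - 2) • xim1_ori - g (i - 2) • ε xim1_ori (t (i - 1))) :
    ‖xim2 - xim2_ori‖ ≤
      (|f (i - 2)| * |g (i - 1)| + |g (i - 2)|) *
          ((L₁ : ℝ) * ‖xi - xip1‖ + (L₂ : ℝ) * |t i - t (i + 1)|)
        + |g (i - 2)| * ((L₁ : ℝ) * ‖xim1_ori - xi‖ + (L₂ : ℝ) * |t (i - 1) - t i|) := by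
  subst h_skip1 h_skip2 h_ori2
  exact two_step_skipping_total_error_general hL₁ hL₂ (f (i - 1)) (g (i - 1)) (f (i - 2))
    (g (i - 2)) (t (i + 1)) (t i) (t (i - 1)) xip1 xi h_ori1
end

section
/- (Closed-form upper bound for the k-step skipping error.) Let E be a real normed vector space, ε : E → ℝ → E with Lipschitz constants L₁ (first argument, uniformly in t) and L₂ (second argument, uniformly in x), f, g : ℤ → ℝ, t : ℤ → ℝ. Fix x_{i+1} ∈ E and k ≥ 1, and define the skipped trajectory x_i = f(i) • x_{i+1} − g(i) • ε x_{i+1} t_{i+1}, x_{i-m} = f(i−m) • x_{i-m+1} − g(i−m) • ε x_{i+1} t_{i+1} for 1 ≤ m ≤ k, and the original trajectory y_{i+1} = x_{i+1}, y_{i-m} = f(i−m) • y_{i-m+1} − g(i−m) • ε y_{i-m+1} t_{i-m+1} for 0 ≤ m ≤ k (so y_i = x_i). Then ‖x_{i-k} − y_{i-k}‖ ≤ Σ_{m=1}^{k} h(k, m) · ( L₁ · ‖x_{i+1} − y_{i-m+1}‖ + L₂ · |t_{i+1} − t_{i-m+1}| ), where h(k, m) := |g(i−m)| · ∏_{j=1}^{k−m}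 |f(i−m−j)| (with the empty product equal to 1 when m = k). -/
open scoped NNReal
open Finset

/-!
Subtracting the two updates gives the one-step recursion
`‖x_{j-1} - y_{j-1}‖ ≤ |f(j-1)| ‖x_j - y_j‖ + |g(j-1)| ‖ε x_{i+1} t_{i+1} - ε y_j t_j‖`.
The discrete Grönwall inequality solves it, with no initial term because the trajectories agree at
step `i`, and passing through `ε y_j t_{i+1}` bounds each noise difference by the two Lipschitz
constants.
-/

section Gronwall

variable {R : Type*} [CommSemiring R] [PartialOrder R] [IsOrderedRing R] {u b c : ℕ → R}

theorem discrete_gronwall_prod_of_lt {N : ℕ} (hu : ∀ n < N, u (n + 1) ≤ c n * u n + b n)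
    (hc : ∀ n < N, 0 ≤ c n) :
    u N ≤ u 0 * ∏ n ∈ range N, c n + ∑ m ∈ range N, b m * ∏ n ∈ Ico (m + 1) N, c n := by
  -- Beyond the horizon, `c = 0` and `b n = u (n + 1)` make the recursion hold trivially.
  let c' n := if n < N then c n else 0
  let b' n := if n < N then b n else u (n + 1)
  have hu' : ∀ n ≥ 0, u (n + 1) ≤ c' n * u n + b' n := fun n _ ↦ by
    by_cases hn : n < N
    · simpa only [c', b', if_pos hn] using hu n hn
    · simp only [c', b', if_neg hn, zero_mul, zero_add, le_refl]
  have hc' : ∀ n ≥ 0, 0 ≤ c' n := fun n _ ↦ by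
    by_cases hn : n < N
    · simpa only [c', if_pos hn] using hc n hn
    · simp only [c', if_neg hn, le_refl]
  have c'_prod (m : ℕ) : ∏ n ∈ Ico m N, c' n = ∏ n ∈ Ico m N, c n :=
    prod_congr rfl fun n hn ↦ if_pos (mem_Ico.mp hn).2
  have b'_sum (w : ℕ → R) : ∑ m ∈ Ico 0 N, b' m * w m = ∑ m ∈ Ico 0 N, b m * w m :=
    sum_congr rfl fun m hm ↦ congrArg (· * w m) (if_pos (mem_Ico.mp hm).2)
  simpa only [c'_prod, b'_sum, range_eq_Ico] using
    discrete_gronwall_prod_general hu' hc' N.zero_le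

end Gronwall

theorem dist_apply₂_le_of_lipschitzWith {α β γ : Type*} [PseudoMetricSpace α]
    [PseudoMetricSpace β] [PseudoMetricSpace γ] {F : α → β → γ} {K₁ K₂ : ℝ≥0} {a a' : α} {b b' : β}
    (h₁ : LipschitzWith K₁ fun a ↦ F a b) (h₂ : LipschitzWith K₂ (F a')) :
    dist (F a b) (F a' b') ≤ K₁ * dist a a' + K₂ * dist b b' :=
  calc dist (F a b) (F a' b')
    _ ≤ dist (F a b) (F a' b) + dist (F a' b) (F a' b') := dist_triangle _ _ _
    _ ≤ K₁ * dist a a' + K₂ * dist b b' :=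
      add_le_add (h₁.dist_le_mul a a') (h₂.dist_le_mul b b')

theorem sum_range_mul_prod_Ico_eq_sum_Icc {R : Type*} [CommSemiring R] (φ w : ℤ → R) (i : ℤ)
    (k : ℕ) :
    ∑ m ∈ range k, w (i - (m + 1)) * ∏ n ∈ Ico (m + 1) k, φ (i - (n + 1)) =
      ∑ m ∈ Icc 1 k, w (i - m) * ∏ j ∈ Icc 1 (k - m), φ (i - m - j) := by
  have hprod (m : ℕ) : ∏ j ∈ Icc 1 (k - m), φ (i - m - j) = ∏ n ∈ Ico m k, φ (i - (n + 1)) := by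
    rw [prod_Ico_eq_prod_range, ← Ico_add_one_right_eq_Icc, prod_Ico_eq_prod_range]
    refine prod_congr (by simp) fun n _ ↦ congrArg φ ?_
    push_cast
    ring
  simp only [hprod]
  rw [← Ico_add_one_right_eq_Icc, range_eq_Ico]
  simpa only [zero_add, Nat.cast_add, Nat.cast_one] using
    sum_Ico_add' (fun m : ℕ ↦ w (i - m) * ∏ n ∈ Ico m k, φ (i - (n + 1))) 0 k 1

section Recursion

variable {𝕜 E : Type*} [SeminormedRing 𝕜] [SeminormedAddCommGroup E] [Module 𝕜 E]
  [IsBoundedSMul 𝕜 E]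

theorem norm_smul_sub_smul_sub_le (a b : 𝕜) (p q u v : E) :
    ‖(a • p - b • u) - (a • q - b • v)‖ ≤ ‖a‖ * ‖p - q‖ + ‖b‖ * ‖u - v‖ :=
  calc ‖(a • p - b • u) - (a • q - b • v)‖
    _ = ‖a • (p - q) - b • (u - v)‖ := by rw [smul_sub, smul_sub, sub_sub_sub_comm]
    _ ≤ ‖a • (p - q)‖ + ‖b • (u - v)‖ := norm_sub_le _ _
    _ ≤ ‖a‖ * ‖p - q‖ + ‖b‖ * ‖u - v‖ := add_le_add (norm_smul_le _ _) (norm_smul_le _ _)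

theorem norm_sub_le_of_affine_recursion {a b : ℕ → 𝕜} {p q u v : ℕ → E} {N : ℕ}
    (hp : ∀ n < N, p (n + 1) = a n • p n - b n • u n)
    (hq : ∀ n < N, q (n + 1) = a n • q n - b n • v n) :
    ‖p N - q N‖ ≤ ‖p 0 - q 0‖ * ∏ n ∈ range N, ‖a n‖ +
      ∑ m ∈ range N, ‖b m‖ * ‖u m - v m‖ * ∏ n ∈ Ico (m + 1) N, ‖a n‖ := by
  refine discrete_gronwall_prod_of_lt (u := fun n ↦ ‖p n - q n‖) (fun n hn ↦ ?_)
    fun n _ ↦ norm_nonneg (a n)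
  rw [hp n hn, hq n hn]
  exact norm_smul_sub_smul_sub_le _ _ _ _ _ _

/-- Step skipping is the case `z = x (i + 1)`, `s = t (i + 1)` of a reused prediction `ε z s`. -/
theorem k_step_skipping_closed_form_bound_general {T : Type*} [PseudoMetricSpace T]
    (ε : E → T → E) (L₁ L₂ : ℝ≥0) (z : E) (s : T)
    (hL₁ : LipschitzWith L₁ fun x ↦ ε x s) (hL₂ : ∀ x, LipschitzWith L₂ (ε x))
    (f g : ℤ → 𝕜) (t : ℤ → T) (i : ℤ) (k : ℕ) (x y : ℤ → E) (hxy : x i = y i)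
    (hx : ∀ m : ℕ, 1 ≤ m → m ≤ k →
      x (i - m) = f (i - m) • x (i - m + 1) - g (i - m) • ε z s)
    (hy : ∀ m : ℕ, 1 ≤ m → m ≤ k →
      y (i - m) = f (i - m) • y (i - m + 1) - g (i - m) • ε (y (i - m + 1)) (t (i - m + 1))) :
    ‖x (i - k) - y (i - k)‖ ≤
      ∑ m ∈ Icc 1 k, (‖g (i - m)‖ * ∏ j ∈ Icc 1 (k - m), ‖f (i - m - j)‖) *
        (L₁ * ‖z - y (i - m + 1)‖ + L₂ * dist s (t (i - m + 1))) := by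
  have hε (j : ℤ) : ‖ε z s - ε (y j) (t j)‖ ≤ L₁ * ‖z - y j‖ + L₂ * dist s (t j) := by
    simpa only [dist_eq_norm] using dist_apply₂_le_of_lipschitzWith hL₁ (hL₂ (y j))
  have hstep (n : ℕ) : i - ((n : ℤ) + 1) + 1 = i - n := by ring
  have hrec := norm_sub_le_of_affine_recursion (N := k)
    (a := fun n ↦ f (i - (n + 1))) (b := fun n ↦ g (i - (n + 1)))
    (p := fun n ↦ x (i - n)) (q := fun n ↦ y (i - n))
    (u := fun _ ↦ ε z s) (v := fun n ↦ ε (y (i - n)) (t (i - n)))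
    (fun n hn ↦ by simpa [hstep] using hx (n + 1) n.succ_pos hn)
    (fun n hn ↦ by simpa [hstep] using hy (n + 1) n.succ_pos hn)
  calc ‖x (i - k) - y (i - k)‖
    _ ≤ ∑ m ∈ Icc 1 k, ‖g (i - m)‖ * ‖ε z s - ε (y (i - m + 1)) (t (i - m + 1))‖ *
          ∏ j ∈ Icc 1 (k - m), ‖f (i - m - j)‖ := by
      rw [← sum_range_mul_prod_Ico_eq_sum_Icc (fun j ↦ ‖f j‖)
        (fun j ↦ ‖g j‖ * ‖ε z s - ε (y (j + 1)) (t (j + 1))‖)]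
      simpa [hxy, hstep] using hrec
    _ ≤ _ := sum_le_sum fun m _ ↦ by
      rw [mul_right_comm]
      gcongr
      exact hε _

end Recursion

/-- Closed-form upper bound for the k-step skipping error:
`‖x_{i-k} − y_{i-k}‖ ≤ Σ_{m=1}^{k} h(k,m) (L₁ ‖x_{i+1} − y_{i-m+1}‖ + L₂ |t_{i+1} − t_{i-m+1}|)`
where `h(k,m) = |g(i−m)| ∏_{j=1}^{k−m} |f(i−m−j)|`. -/
theorem k_step_skipping_closed_form_bound {E : Type*} [NormedAddCommGroup E] [NormedSpace ℝ E]
    (ε : E → ℝ → E) (L₁ L₂ : ℝ≥0)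
    (hL₁ : ∀ t : ℝ, LipschitzWith L₁ (fun x => ε x t))
    (hL₂ : ∀ x : E, LipschitzWith L₂ (fun t => ε x t))
    (f g : ℤ → ℝ) (t : ℤ → ℝ) (i : ℤ) (k : ℕ) (hk : 1 ≤ k)
    (x y : ℤ → E)
    (hx0 : x i = f i • x (i + 1) - g i • ε (x (i + 1)) (t (i + 1)))
    (hx : ∀ m : ℕ, 1 ≤ m → m ≤ k →
      x (i - m) = f (i - m) • x (i - m + 1) - g (i - m) • ε (x (i + 1)) (t (i + 1)))
    (hy0 : y (i + 1) = x (i + 1))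
    (hy : ∀ m : ℕ, m ≤ k →
      y (i - m) = f (i - m) • y (i - m + 1) - g (i - m) • ε (y (i - m + 1)) (t (i - m + 1))) :
    ‖x (i - k) - y (i - k)‖ ≤
      ∑ m ∈ Finset.Icc 1 k,
        (|g (i - m)| * ∏ j ∈ Finset.Icc 1 (k - m), |f (i - m - j)|) *
          ((L₁ : ℝ) * ‖x (i + 1) - y (i - m + 1)‖ + (L₂ : ℝ) * |t (i + 1) - t (i - m + 1)|) := by
  have hxy : x i = y i := by simpa [hy0, hx0] using (hy 0 k.zero_le).symm
  exact k_step_skipping_closed_form_bound_general ε L₁ L₂ (x (i + 1)) (t (i + 1)) (hL₁ _) hL₂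
    f g t i k x y hxy hx fun m _ ↦ hy m
end

section
/- (Stability of consecutive noise predictions from a small third-order latent difference, constant-coefficient case.) Let E be a real normed vector space, ε : E → ℝ → E, t : ℤ → ℝ, c ∈ ℝ with c ≠ 0, and let x : ℤ → E satisfy x_{j-1} = x_j − c • ε x_j t_j for all relevant j. Write Δx_j := x_j − x_{j+1}, ε_j := ε x_j t_j, and Δ³x_{i-1} := Δx_{i-1} − 2 • Δx_i + Δx_{i+1}. Then for every i, ‖ε_i − ε_{i+1}‖ ≤ ‖ε_{i+1} − ε_{i+2}‖ + ‖Δ³x_{i-1}‖ / |c|. Consequently, if the previous noise predictions changed little and the third-order latent difference is small, the next first difference of noise predictions is small — justifying the reuse of the cached noise prediction. -/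
/-!
The update says that the first difference of the latents is `c` times the shifted noise
predictions. Hence the third difference of the latents is `c` times the second difference of the
noise predictions, which is the change between two consecutive first differences of the noise
predictions, and the bound is the triangle inequality.
-/

open scoped fwdDiff

theorem norm_le_norm_add_norm_fwdDiff {M E : Type*} [AddCommMonoid M] [SeminormedAddCommGroup E]
    (h : M) (f : M → E) (y : M) :
    ‖f y‖ ≤ ‖f (y + h)‖ + ‖Δ_[h] f y‖ :=
  norm_le_norm_add_norm_sub _ _

theorem fwdDiff_iter_succ_sub_eq_smul {R M E : Type*} [AddCommGroup M] [AddCommGroup E]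
    [Monoid R] [DistribMulAction R E] {h : M} {c : R} {x e : M → E}
    (hx : ∀ j, x (j - h) = x j - c • e j) (n : ℕ) (y : M) :
    Δ_[h] ^[n + 1] x (y - h) = c • Δ_[h] ^[n] e y := by
  have fwdDiff_eq : Δ_[h] x = fun j ↦ (c • e) (j + h) := by
    funext j
    have update := hx (j + h)
    rw [add_sub_cancel_right] at update
    rw [fwdDiff, update, sub_sub_cancel, Pi.smul_apply]
  rw [Function.iterate_succ_apply, fwdDiff_eq, fwdDiff_iter_comp_add, sub_add_cancel,
    fwdDiff_iter_const_smul, Pi.smul_apply]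

-- The latent difference `x j - x (j + 1)` is `-Δ_[1] x j`; its third iterate carries the same sign.
theorem sub_two_smul_add_eq_neg_fwdDiff_iter_three {R E : Type*} [Semiring R] [AddCommGroup E]
    [Module R E] (x : ℤ → E) (i : ℤ) :
    (x (i - 1) - x i) - (2 : R) • (x i - x (i + 1)) + (x (i + 1) - x (i + 2)) =
      -Δ_[1] ^[3] x (i - 1) := by
  have shift_two : i + 1 + 1 = i + 2 := by ring
  simp only [Function.iterate_succ_apply', Function.iterate_zero_apply, fwdDiff, sub_add_cancel,
    shift_two, two_smul]
  abel

theorem noise_prediction_stability_constant_coeff_general {𝕜 M E : Type*}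
    [NormedDivisionRing 𝕜] [AddCommGroup M] [SeminormedAddCommGroup E] [Module 𝕜 E]
    [NormSMulClass 𝕜 E] {h : M} {c : 𝕜} (hc : c ≠ 0) {x e : M → E}
    (hx : ∀ j, x (j - h) = x j - c • e j) (n : ℕ) (i : M) :
    ‖Δ_[h] ^[n] e i‖ ≤
      ‖Δ_[h] ^[n] e (i + h)‖ + ‖Δ_[h] ^[n + 2] x (i - h)‖ / ‖c‖ := by
  rw [fwdDiff_iter_succ_sub_eq_smul hx, norm_smul,
    mul_div_cancel_left₀ _ (norm_ne_zero_iff.mpr hc), Function.iterate_succ_apply']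
  exact norm_le_norm_add_norm_fwdDiff h (Δ_[h] ^[n] e) i

/-- Stability of consecutive noise predictions from a small third-order latent
difference (constant-coefficient case): `‖ε_i − ε_{i+1}‖ ≤ ‖ε_{i+1} − ε_{i+2}‖ + ‖Δ³x_{i-1}‖/|c|`. -/
theorem noise_prediction_stability_constant_coeff {E : Type*}
    [NormedAddCommGroup E] [NormedSpace ℝ E]
    (ε : E → ℝ → E) (t : ℤ → ℝ) (c : ℝ) (hc : c ≠ 0) (x : ℤ → E)
    (hx : ∀ j : ℤ, x (j - 1) = x j - c • ε (x j) (t j)) :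
    ∀ i : ℤ,
      ‖ε (x i) (t i) - ε (x (i + 1)) (t (i + 1))‖ ≤
        ‖ε (x (i + 1)) (t (i + 1)) - ε (x (i + 2)) (t (i + 2))‖
          + ‖(x (i - 1) - x i) - (2 : ℝ) • (x i - x (i + 1)) + (x (i + 1) - x (i + 2))‖ / |c| := by
  intro i
  rw [sub_two_smul_add_eq_neg_fwdDiff_iter_three, norm_neg, norm_sub_rev (ε (x i) _),
    norm_sub_rev _ (ε (x (i + 2)) _)]
  simpa only [Function.iterate_one, fwdDiff, add_assoc, Int.reduceAdd, Nat.reduceAdd,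
    Real.norm_eq_abs] using
    noise_prediction_stability_constant_coeff_general (e := fun j ↦ ε (x j) (t j)) hc hx 1 i
end
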